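/- arXiv:2103.04890 — 2 statements merged into one kernel-verified Lean document; each statement's English description precedes it below -/
import Mathlib

section
/- Let Γ be a subgroup of SL(2,ℝ) commensurable with SL(2,ℤ) whose cusp ∞ has width N (so that z ↦ z+N generates the translations in Γ up to ±I), let χ be a finite-order character of Γ, and let φ: ℍ → ℂ be holomorphic, N-periodic and holomorphic at ∞, satisfying (cz+d)^{-2} φ((az+b)/(cz+d)) = φ(z) + α c/(cz+d) for all (a b; c d) ∈ Γ, with α ≠ 0. Let k ≥ 1, f₁ ∈ M_{k-2}(Γ,χ), f₀ ∈ M_k(Γ,χ), and f = f₀ + φ f₁ with f not identically zero. Set W_f := −f² + α(f₁ f′ − f₁′ f). Then W_f is not identically zero, and its vanishing order at ∞ satisfies: v_∞(W_f) = 2 v_∞(f) if v_∞(f) ≤ v_∞(f₁), and v_∞(W_f) = v_∞(f) + v_∞(f₁) if v_∞(f) > v_∞(f₁). -/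
noncomputable section

open Complex Matrix Filter Topology

abbrev SL2R := Matrix.SpecialLinearGroup (Fin 2) ℝ
abbrev SL2Z := Matrix.SpecialLinearGroup (Fin 2) ℤ

/-- The upper half-plane, as a subset of `ℂ`. -/
def UHP : Set ℂ := {z : ℂ | 0 < z.im}

/-- The embedding of `SL(2,ℤ)` into `SL(2,ℝ)`. -/
def toR : SL2Z →* SL2R := Matrix.SpecialLinearGroup.map (Int.castRingHom ℝ)

/-- `SL(2,ℤ)` as a subgroup of `SL(2,ℝ)`. -/
def SL2ZR : Subgroup SL2R := Subgroup.map toR ⊤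

/-- Möbius action of a real matrix on a complex number. -/
def moeb (γ : SL2R) (z : ℂ) : ℂ :=
  ((γ.1 0 0 : ℂ) * z + (γ.1 0 1 : ℂ)) / ((γ.1 1 0 : ℂ) * z + (γ.1 1 1 : ℂ))

/-- The automorphy factor `cz + d`. -/
def jfac (γ : SL2R) (z : ℂ) : ℂ := (γ.1 1 0 : ℂ) * z + (γ.1 1 1 : ℂ)

/-- A holomorphic modular form of weight `k` and character `χ` on `Γ ≤ SL(2,ℝ)`
(for `Γ` commensurable with `SL(2,ℤ)`): holomorphic on `ℍ`, satisfying the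
transformation law, and holomorphic (bounded) at every cusp. -/
structure IsModularForm (Γ : Subgroup SL2R) (χ : SL2R → ℂ) (k : ℤ) (f : ℂ → ℂ) : Prop where
  holo : DifferentiableOn ℂ f UHP
  transform : ∀ γ ∈ Γ, ∀ z ∈ UHP, f (moeb γ z) = χ γ * jfac γ z ^ k * f z
  bdd_at_cusps : ∀ σ : SL2Z, ∃ C : ℝ, ∀ z ∈ UHP, 1 ≤ z.im →
    ‖jfac (toR σ) z ^ (-k) * f (moeb (toR σ) z)‖ ≤ C

/-- A finite-order character of `Γ`. -/
def IsCharacter (Γ : Subgroup SL2R) (χ : SL2R → ℂ) : Prop :=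
  (∀ γ ∈ Γ, ∀ δ ∈ Γ, χ (γ * δ) = χ γ * χ δ) ∧
    ∃ n : ℕ, 0 < n ∧ ∀ γ ∈ Γ, χ γ ^ n = 1

/-- `φ` is quasimodular of weight 2 and depth 1 on `Γ`, with constant `α`:
`(cz+d)⁻² φ(γz) = φ(z) + α c/(cz+d)`. -/
def IsQuasiWt2 (Γ : Subgroup SL2R) (α : ℂ) (φ : ℂ → ℂ) : Prop :=
  ∀ γ ∈ Γ, ∀ z ∈ UHP,
    (jfac γ z)⁻¹ ^ 2 * φ (moeb γ z) = φ z + α * (γ.1 1 0 : ℂ) / jfac γ z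

/-- `f` has vanishing order `ν` at the cusp `∞`, with respect to `q_N = e^{2πiz/N}`:
`q_N^{-ν}·f(z)` tends to a nonzero constant as `Im z → ∞`. -/
def VOrder (N : ℝ) (f : ℂ → ℂ) (ν : ℝ) : Prop :=
  ∃ c : ℂ, c ≠ 0 ∧ ∀ ε : ℝ, 0 < ε → ∃ Y : ℝ, ∀ z : ℂ, Y ≤ z.im →
    ‖Complex.exp (-(2 * Real.pi * Complex.I * (ν : ℂ) * z / (N : ℂ))) * f z - c‖ < ε


/-- The translation matrix `(1 t; 0 1)` in `SL(2,ℝ)`. -/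
def upperTri (t : ℝ) : SL2R := ⟨!![1, t; 0, 1], by norm_num [Matrix.det_fin_two_of]⟩

/-- The cusp `∞` of `Γ` has width `N`: the translation by `N` lies in `Γ`, and every
upper-triangular element of `Γ` (i.e. a translation up to `±I`) translates by an
integer multiple of `N`. -/
def HasWidth (Γ : Subgroup SL2R) (N : ℝ) : Prop :=
  0 < N ∧ upperTri N ∈ Γ ∧
    ∀ γ ∈ Γ, γ.1 1 0 = 0 → ∃ m : ℤ, γ.1 0 1 = γ.1 0 0 * (m * N)

/-!
Since `W_f = -f² (1 + α (f₁ / f)')`, vanishing of `W_f` would make `α f₁ / f + z` constant near `∞`,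
which is absurd because `f₁ / f` is `N`-periodic.

By the Cauchy estimate, `f = (c + o(1)) q^ν` may be differentiated to
`f' = (2πi ν c / N + o(1)) q^ν`. So if moreover `f₁ = (d + o(1)) q^μ`, then
`f₁ f' - f₁' f = (2πi (ν - μ) c d / N + o(1)) q^(ν + μ)`. It is dominated by `-f²` when `ν ≤ μ`
(for `ν = μ` because its coefficient cancels), and dominates `-f²` when `μ < ν`.
-/

open Function.Periodic (qParam)
open scoped Real

/-- The filter of neighbourhoods of the cusp `∞`, as in `Mathlib.Analysis.Complex.Periodic`. -/
local notation "I∞" => comap Complex.im atTop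

theorem eventually_comap_im_atTop {p : ℂ → Prop} :
    (∀ᶠ z in I∞, p z) ↔ ∃ Y : ℝ, ∀ z : ℂ, Y ≤ z.im → p z := by
  simp [(atTop_basis.comap Complex.im).eventually_iff]

theorem isOpen_UHP : IsOpen UHP := isOpen_lt continuous_const Complex.continuous_im

theorem eventually_mem_UHP : ∀ᶠ z in I∞, z ∈ UHP :=
  tendsto_comap.eventually_gt_atTop 0

theorem eventually_differentiableAt_of_differentiableOn_UHP {f : ℂ → ℂ}
    (hf : DifferentiableOn ℂ f UHP) : ∀ᶠ z in I∞, DifferentiableAt ℂ f z :=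
  eventually_mem_UHP.mono fun _ hz => hf.differentiableAt (isOpen_UHP.mem_nhds hz)

theorem eventually_forall_mem_closedBall {p : ℂ → Prop} (r : ℝ) (hp : ∀ᶠ z in I∞, p z) :
    ∀ᶠ z in I∞, ∀ w ∈ Metric.closedBall z r, p w := by
  obtain ⟨Y, hY⟩ := eventually_comap_im_atTop.1 hp
  refine eventually_comap_im_atTop.2 ⟨Y + r, fun z hz w hw => hY w ?_⟩
  have him : |z.im - w.im| ≤ r :=
    (Complex.abs_im_le_norm (z - w)).trans (mem_closedBall_iff_norm'.1 hw)
  linarith [le_abs_self (z.im - w.im)]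

theorem tendsto_deriv_zero_of_tendsto {E : Type*} [NormedAddCommGroup E] [NormedSpace ℂ E]
    {g : ℂ → E} {c : E} (hdiff : ∀ᶠ z in I∞, DifferentiableAt ℂ g z)
    (hg : Tendsto g I∞ (𝓝 c)) : Tendsto (deriv g) I∞ (𝓝 0) := by
  rw [Metric.tendsto_nhds] at hg ⊢
  intro ε hε
  filter_upwards [eventually_forall_mem_closedBall 1 (hdiff.and (hg (ε / 2) (half_pos hε)))]
    with z hz
  have hdiffCont : DiffContOnCl ℂ (fun w => g w - c) (Metric.ball z 1) :=
    DifferentiableOn.diffContOnCl_ball (U := Metric.closedBall z 1)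
      (fun w hw => ((hz w hw).1.sub_const c).differentiableWithinAt) subset_rfl
  have hbound : ‖deriv (fun w => g w - c) z‖ ≤ ε / 2 / 1 :=
    Complex.norm_deriv_le_of_forall_mem_sphere_norm_le one_pos hdiffCont fun w hw =>
      (dist_eq_norm (g w) c ▸ (hz w (Metric.sphere_subset_closedBall hw)).2).le
  rw [deriv_sub_const, div_one] at hbound
  rw [dist_zero_right]
  exact hbound.trans_lt (half_lt_self hε)

/-- The real power `q_N ^ ν = e^{2πiνz/N}` of the parameter at `∞`, with the branch that is
multiplicative in `ν`. -/
def qPow (N ν : ℝ) (z : ℂ) : ℂ := qParam N (ν * z)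

section

variable {N ν μ : ℝ} {f g : ℂ → ℂ} {c d : ℂ} {z : ℂ}

theorem qPow_ne_zero : qPow N ν z ≠ 0 := Function.Periodic.qParam_ne_zero _

theorem qPow_add : qPow N (ν + μ) z = qPow N ν z * qPow N μ z := by
  rw [qPow, qPow, qPow, qParam, qParam, qParam, ← Complex.exp_add]
  push_cast
  ring_nf

theorem hasDerivAt_qPow : HasDerivAt (qPow N ν) (2 * π * I * ν / N * qPow N ν z) z := by
  have hexponent : HasDerivAt (fun w : ℂ => 2 * π * I * (ν * w) / N) (2 * π * I * (ν * 1) / N) z :=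
    (((hasDerivAt_id z).const_mul (ν : ℂ)).const_mul _).div_const _
  exact hexponent.cexp.congr_deriv (by rw [qPow, qParam]; ring)

theorem tendsto_qPow_zero (hN : 0 < N) (hν : 0 < ν) : Tendsto (qPow N ν) I∞ (𝓝 0) := by
  have hscale : Tendsto (fun z : ℂ => ν * z) I∞ I∞ :=
    tendsto_comap_iff.2 <| by
      simpa [Function.comp_def] using tendsto_comap.const_mul_atTop hν
  exact (Function.Periodic.qParam_tendsto hN).mono_right nhdsWithin_le_nhds |>.comp hscale

/-- `f = (c + o(1)) q_N ^ ν` at `∞`. The coefficient `c` may be zero, so `ν` is only a lower bound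
for the vanishing order. -/
def HasQLimit (N ν : ℝ) (f : ℂ → ℂ) (c : ℂ) : Prop :=
  Tendsto (fun z => f z / qPow N ν z) I∞ (𝓝 c)

theorem vOrder_iff_exists_hasQLimit : VOrder N f ν ↔ ∃ c ≠ 0, HasQLimit N ν f c := by
  simp only [VOrder, HasQLimit, Metric.tendsto_nhds, eventually_comap_im_atTop, dist_eq_norm,
    qPow, qParam, Complex.exp_neg, div_eq_inv_mul (_ : ℂ) (Complex.exp _), mul_assoc, gt_iff_lt]

namespace HasQLimit

theorem add (hf : HasQLimit N ν f c) (hg : HasQLimit N ν g d) :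
    HasQLimit N ν (fun z => f z + g z) (c + d) := by
  simpa only [HasQLimit, add_div] using Tendsto.add hf hg

theorem sub (hf : HasQLimit N ν f c) (hg : HasQLimit N ν g d) :
    HasQLimit N ν (fun z => f z - g z) (c - d) := by
  simpa only [HasQLimit, sub_div] using Tendsto.sub hf hg

theorem const_mul (a : ℂ) (hf : HasQLimit N ν f c) : HasQLimit N ν (fun z => a * f z) (a * c) := by
  simpa only [HasQLimit, mul_div_assoc] using Tendsto.const_mul a hf

theorem neg (hf : HasQLimit N ν f c) : HasQLimit N ν (fun z => -f z) (-c) := by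
  simpa only [HasQLimit, neg_div] using Tendsto.neg hf

theorem mul (hf : HasQLimit N ν f c) (hg : HasQLimit N μ g d) :
    HasQLimit N (ν + μ) (fun z => f z * g z) (c * d) := by
  simpa only [HasQLimit, qPow_add, div_mul_div_comm] using Tendsto.mul hf hg

theorem sq (hf : HasQLimit N ν f c) : HasQLimit N (2 * ν) (fun z => f z ^ 2) (c ^ 2) := by
  simpa only [two_mul, pow_two] using hf.mul hf

theorem of_lt (hN : 0 < N) (hνμ : ν < μ) (hf : HasQLimit N μ f c) : HasQLimit N ν f 0 := by
  have hprod : Tendsto (fun z => qPow N (μ - ν) z * (f z / qPow N μ z)) I∞ (𝓝 (0 * c)) :=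
    (tendsto_qPow_zero hN (sub_pos.2 hνμ)).mul hf
  rw [zero_mul] at hprod
  refine hprod.congr fun z => ?_
  have hsplit : qPow N μ z = qPow N (μ - ν) z * qPow N ν z := by rw [← qPow_add, sub_add_cancel]
  rw [hsplit, ← mul_div_assoc, mul_div_mul_left _ _ qPow_ne_zero]

theorem exists_of_le (hN : 0 < N) (hνμ : ν ≤ μ) (hf : HasQLimit N μ f c) :
    ∃ d, HasQLimit N ν f d := by
  rcases hνμ.eq_or_lt with rfl | hlt
  · exact ⟨c, hf⟩
  · exact ⟨0, hf.of_lt hN hlt⟩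

theorem of_eventuallyEq_zero (hf : ∀ᶠ z in I∞, f z = 0) : HasQLimit N ν f 0 :=
  tendsto_const_nhds.congr' <| hf.mono fun z hz => by simp only [hz, zero_div]

theorem eventually_ne_zero (hc : c ≠ 0) (hf : HasQLimit N ν f c) : ∀ᶠ z in I∞, f z ≠ 0 :=
  (Tendsto.eventually_ne hf hc).mono fun _ hz hfz => hz (by rw [hfz, zero_div])

protected theorem deriv (hf : HasQLimit N ν f c) (hdiff : ∀ᶠ z in I∞, DifferentiableAt ℂ f z) :
    HasQLimit N ν (deriv f) (2 * π * I * ν / N * c) := by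
  have hquot : ∀ᶠ z in I∞, HasDerivAt (fun w => f w / qPow N ν w)
      (deriv f z / qPow N ν z - 2 * π * I * ν / N * (f z / qPow N ν z)) z := by
    filter_upwards [hdiff] with z hz
    refine (hz.hasDerivAt.div hasDerivAt_qPow qPow_ne_zero).congr_deriv ?_
    field_simp [qPow_ne_zero (N := N) (ν := ν) (z := z)]
  have hzero := tendsto_deriv_zero_of_tendsto (hquot.mono fun _ hz => hz.differentiableAt) hf
  have hsum := hzero.add (Tendsto.const_mul (2 * π * I * ν / N) hf)
  rw [zero_add] at hsum
  exact hsum.congr' <| hquot.mono fun z hz => by rw [hz.deriv, sub_add_cancel]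

theorem wronskian (hf : HasQLimit N ν f c) (hg : HasQLimit N μ g d)
    (hfdiff : ∀ᶠ z in I∞, DifferentiableAt ℂ f z) (hgdiff : ∀ᶠ z in I∞, DifferentiableAt ℂ g z) :
    HasQLimit N (ν + μ) (fun z => g z * deriv f z - deriv g z * f z)
      (2 * π * I * (ν - μ) / N * (c * d)) := by
  rw [add_comm]
  convert (hg.mul (hf.deriv hfdiff)).sub ((hg.deriv hgdiff).mul hf) using 1
  ring

end HasQLimit

/-- `W_f = -f² + α (f₁ f' - f₁' f)` for an arbitrary pair of functions `f` and `f₁ = g`. -/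
def modularWronskian (α : ℂ) (f g : ℂ → ℂ) (z : ℂ) : ℂ :=
  -(f z) ^ 2 + α * (g z * deriv f z - deriv g z * f z)

variable {α : ℂ}

theorem HasQLimit.modularWronskian_of_same_order (hf : HasQLimit N ν f c) (hg : HasQLimit N ν g d)
    (hfdiff : ∀ᶠ z in I∞, DifferentiableAt ℂ f z) (hgdiff : ∀ᶠ z in I∞, DifferentiableAt ℂ g z) :
    HasQLimit N (2 * ν) (modularWronskian α f g) (-c ^ 2) := by
  have hbracket := (hf.wronskian hg hfdiff hgdiff).const_mul α
  rw [← two_mul, sub_self, mul_zero, zero_div, zero_mul, mul_zero] at hbracket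
  rw [← add_zero (-c ^ 2)]
  exact hf.sq.neg.add hbracket

theorem HasQLimit.modularWronskian_of_lt (hN : 0 < N) (hμν : μ < ν) (hf : HasQLimit N ν f c)
    (hg : HasQLimit N μ g d) (hfdiff : ∀ᶠ z in I∞, DifferentiableAt ℂ f z)
    (hgdiff : ∀ᶠ z in I∞, DifferentiableAt ℂ g z) :
    HasQLimit N (ν + μ) (modularWronskian α f g) (α * (2 * π * I * (ν - μ) / N * (c * d))) := by
  have hsq := (hf.sq.of_lt hN (show ν + μ < 2 * ν by linarith)).neg
  rw [neg_zero] at hsq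
  rw [← zero_add (α * _)]
  exact hsq.add ((hf.wronskian hg hfdiff hgdiff).const_mul α)

theorem hasDerivAt_mul_div_add_self (hf : DifferentiableAt ℂ f z) (hg : DifferentiableAt ℂ g z)
    (hfz : f z ≠ 0) :
    HasDerivAt (fun w => α * (g w / f w) + w) (-modularWronskian α f g z / f z ^ 2) z := by
  refine (((hg.hasDerivAt.div hf.hasDerivAt hfz).const_mul α).add (hasDerivAt_id z)).congr_deriv ?_
  rw [modularWronskian]
  field_simp
  ring

theorem frequently_modularWronskian_ne_zero (hN : N ≠ 0)
    (hf : ∀ᶠ z in I∞, DifferentiableAt ℂ f z) (hg : ∀ᶠ z in I∞, DifferentiableAt ℂ g z)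
    (hf_ne : ∀ᶠ z in I∞, f z ≠ 0) (hper : ∀ᶠ z in I∞, g (z + N) * f z = g z * f (z + N)) :
    ∃ᶠ z in I∞, modularWronskian α f g z ≠ 0 := by
  intro hW
  obtain ⟨Y, hY⟩ := eventually_comap_im_atTop.1 (hf.and (hg.and (hf_ne.and (hper.and hW))))
  let S : Set ℂ := {z | Y < z.im}
  have hopen : IsOpen S := isOpen_lt continuous_const Complex.continuous_im
  have hconn : IsPreconnected S := (convex_halfSpace_im_gt Y).isPreconnected
  have hderiv : ∀ z ∈ S, HasDerivAt (fun w => α * (g w / f w) + w) 0 z := fun z hz => by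
    obtain ⟨hfz, hgz, hfz_ne, -, hWz⟩ := hY z (le_of_lt hz)
    simpa only [not_not.1 hWz, neg_zero, zero_div] using
      hasDerivAt_mul_div_add_self (α := α) hfz hgz hfz_ne
  let z₀ : ℂ := (Y + 1 : ℝ) * I
  have hz₀ : z₀ ∈ S := by simp [S, z₀]
  have hz₀N : z₀ + N ∈ S := by simp [S, z₀]
  have hconst : α * (g (z₀ + N) / f (z₀ + N)) + (z₀ + N) = α * (g z₀ / f z₀) + z₀ :=
    hopen.is_const_of_deriv_eq_zero hconn
      (fun z hz => (hderiv z hz).differentiableAt.differentiableWithinAt)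
      (fun z hz => (hderiv z hz).deriv) hz₀N hz₀
  obtain ⟨-, -, hf₀_ne, hper₀, -⟩ := hY z₀ (le_of_lt hz₀)
  obtain ⟨-, -, hfN_ne, -, -⟩ := hY (z₀ + N) (le_of_lt hz₀N)
  rw [(div_eq_div_iff hfN_ne hf₀_ne).2 hper₀, add_right_inj, add_eq_left] at hconst
  exact hN (Complex.ofReal_eq_zero.1 hconst)

theorem wronskian_vanishing_order_at_infinity_general (hN : 0 < N) (hα : α ≠ 0)
    {f₁ : ℂ → ℂ} (hf : DifferentiableOn ℂ f UHP) (hf₁ : DifferentiableOn ℂ f₁ UHP)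
    (hper : ∀ z ∈ UHP, f₁ (z + N) * f z = f₁ z * f (z + N)) (hνf : VOrder N f ν) :
    (∃ z ∈ UHP, modularWronskian α f f₁ z ≠ 0) ∧
      (∀ ν₁ : ℝ, VOrder N f₁ ν₁ →
        (ν ≤ ν₁ → VOrder N (modularWronskian α f f₁) (2 * ν)) ∧
        (ν₁ < ν → VOrder N (modularWronskian α f f₁) (ν + ν₁))) ∧
      ((∀ z ∈ UHP, f₁ z = 0) → VOrder N (modularWronskian α f f₁) (2 * ν)) := by
  simp only [vOrder_iff_exists_hasQLimit] at hνf ⊢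
  obtain ⟨c, hc, hfc⟩ := hνf
  have hfdiff := eventually_differentiableAt_of_differentiableOn_UHP hf
  have hf₁diff := eventually_differentiableAt_of_differentiableOn_UHP hf₁
  have hc_sq : -c ^ 2 ≠ 0 := neg_ne_zero.2 (pow_ne_zero 2 hc)
  refine ⟨?_, fun ν₁ ⟨d, hd, hf₁d⟩ => ⟨fun hle => ?_, fun hlt => ?_⟩, fun hzero => ?_⟩
  · obtain ⟨z, hWz, hz⟩ := ((frequently_modularWronskian_ne_zero hN.ne' hfdiff hf₁diff
      (hfc.eventually_ne_zero hc) (eventually_mem_UHP.mono hper)).and_eventually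
      eventually_mem_UHP).exists
    exact ⟨z, hz, hWz⟩
  · obtain ⟨d', hf₁d'⟩ := hf₁d.exists_of_le hN hle
    exact ⟨_, hc_sq, hfc.modularWronskian_of_same_order hf₁d' hfdiff hf₁diff⟩
  · refine ⟨_, ?_, hfc.modularWronskian_of_lt hN hlt hf₁d hfdiff hf₁diff⟩
    have hν : (ν - ν₁ : ℂ) ≠ 0 := sub_ne_zero.2 (Complex.ofReal_injective.ne hlt.ne')
    have hN' : (N : ℂ) ≠ 0 := Complex.ofReal_ne_zero.2 hN.ne'
    exact mul_ne_zero hα (mul_ne_zero (div_ne_zero (mul_ne_zero Complex.two_pi_I_ne_zero hν) hN')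
      (mul_ne_zero hc hd))
  · have hf₁_zero : HasQLimit N ν f₁ 0 := .of_eventuallyEq_zero (eventually_mem_UHP.mono hzero)
    exact ⟨_, hc_sq, hfc.modularWronskian_of_same_order hf₁_zero hfdiff hf₁diff⟩

end

namespace IsModularForm

variable {Γ : Subgroup SL2R} {χ : SL2R → ℂ} {k l : ℤ} {f₀ f₁ φ : ℂ → ℂ} {t : ℝ} {z : ℂ}

theorem apply_add_of_upperTri_mem (hf₀ : IsModularForm Γ χ k f₀) (ht : upperTri t ∈ Γ)
    (hz : z ∈ UHP) : f₀ (z + t) = χ (upperTri t) * f₀ z := by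
  simpa [moeb, jfac, upperTri] using hf₀.transform _ ht z hz

theorem apply_add_mul_eq_mul_apply_add (hf₀ : IsModularForm Γ χ k f₀)
    (hf₁ : IsModularForm Γ χ l f₁) (ht : upperTri t ∈ Γ) (hφ : φ (z + t) = φ z) (hz : z ∈ UHP) :
    f₁ (z + t) * (f₀ z + φ z * f₁ z) = f₁ z * (f₀ (z + t) + φ (z + t) * f₁ (z + t)) := by
  rw [hf₀.apply_add_of_upperTri_mem ht hz, hf₁.apply_add_of_upperTri_mem ht hz, hφ]
  ring

end IsModularForm

/-- vanishing order of the Wronskian at `∞`.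
With `Γ`, `χ`, `φ`, `f₀`, `f₁`, `f`, `W_f` as in Statement 0, where moreover the cusp `∞`
of `Γ` has width `N` and `φ` is `N`-periodic and holomorphic at `∞`: if `f ≢ 0` then
`W_f ≢ 0`, and `v_∞(W_f) = 2v_∞(f)` when `v_∞(f) ≤ v_∞(f₁)`, while
`v_∞(W_f) = v_∞(f) + v_∞(f₁)` when `v_∞(f) > v_∞(f₁)` (with `v_∞(0) = +∞`, so that the
case `f₁ ≡ 0` falls under the first alternative). -/
theorem wronskian_vanishing_order_at_infinity
    (Γ : Subgroup SL2R) (hcomm : Subgroup.Commensurable SL2ZR Γ)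
    (N : ℝ) (hwidth : HasWidth Γ N)
    (χ : SL2R → ℂ) (hχ : IsCharacter Γ χ)
    (φ : ℂ → ℂ) (hφholo : DifferentiableOn ℂ φ UHP)
    (hφper : ∀ z ∈ UHP, φ (z + N) = φ z)
    (hφbdd : ∃ C : ℝ, ∀ z ∈ UHP, 1 ≤ z.im → ‖φ z‖ ≤ C)
    (α : ℂ) (hα : α ≠ 0) (hφqm : IsQuasiWt2 Γ α φ)
    (k : ℤ) (hk : 1 ≤ k)
    (f₀ f₁ : ℂ → ℂ)
    (hf₀ : IsModularForm Γ χ k f₀)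
    (hf₁ : IsModularForm Γ χ (k - 2) f₁)
    (f W : ℂ → ℂ)
    (hf : ∀ z, f z = f₀ z + φ z * f₁ z)
    (hW : ∀ z, W z = -(f z) ^ 2 + α * (f₁ z * deriv f z - deriv f₁ z * f z))
    (hfne : ∃ z ∈ UHP, f z ≠ 0)
    (νf : ℝ) (hνf : VOrder N f νf) :
    (∃ z ∈ UHP, W z ≠ 0) ∧
      (∀ νf₁ : ℝ, VOrder N f₁ νf₁ →
        (νf ≤ νf₁ → VOrder N W (2 * νf)) ∧ (νf₁ < νf → VOrder N W (νf + νf₁))) ∧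
      ((∀ z ∈ UHP, f₁ z = 0) → VOrder N W (2 * νf)) := by
  obtain rfl : f = fun z => f₀ z + φ z * f₁ z := funext hf
  obtain rfl : W = modularWronskian α (fun z => f₀ z + φ z * f₁ z) f₁ := funext hW
  exact wronskian_vanishing_order_at_infinity_general hwidth.1 hα
    (hf₀.holo.add (hφholo.mul hf₁.holo)) hf₁.holo
    (fun z hz => hf₀.apply_add_mul_eq_mul_apply_add hf₁ hwidth.2.1 (hφper z hz) hz) hνf
end
end

section
/- Let Γ be a subgroup of SL(2,ℝ) commensurable with SL(2,ℤ) and let φ: ℍ → ℂ be holomorphic such that for some nonzero α ∈ ℂ one has (cz+d)^{-2} φ((az+b)/(cz+d)) = φ(z) + α c/(cz+d) for all (a b; c d) ∈ Γ. If z₀ ∈ ℍ is an elliptic point of Γ, i.e. there exists γ ∈ Γ with γ ≠ ±I and γ z₀ = z₀, then φ(z₀) ≠ 0. -/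
noncomputable section

open Complex Matrix Filter Topology

/-!
The factor `j = cz₀ + d` of an element fixing `z₀` is an eigenvalue of that element, of modulus `1`
because `Im (γz) = Im z / |cz + d| ^ 2`. The transformation law at `z₀` is thus
`(j̄ - j) φ(z₀) = α c`, and `j - j̄ = 2 i c Im z₀`. As `c ≠ 0` for an elliptic element, this gives
`φ(z₀) = i α / (2 Im z₀)`: the completion `φ(z) - i α / (2 Im z)`, which transforms with weight `2`,
vanishes at elliptic points.
-/

open scoped UpperHalfPlane ComplexConjugate

lemma coe_eq_one_or_eq_neg_one_of_mem_center {R : Type*} [CommRing R] [NoZeroDivisors R]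
    {A : Matrix.SpecialLinearGroup (Fin 2) R}
    (hA : A ∈ Subgroup.center (Matrix.SpecialLinearGroup (Fin 2) R)) :
    A.1 = 1 ∨ A.1 = -1 := by
  obtain ⟨r, hr, hAr⟩ := Matrix.SpecialLinearGroup.mem_center_iff.mp hA
  rw [Fintype.card_fin, sq_eq_one_iff] at hr
  rcases hr with rfl | rfl
  · exact .inl (by rw [← hAr, map_one])
  · exact .inr (by rw [← hAr, map_neg, map_one])

section FixedPoint

variable {γ : SL2R} {τ : ℍ}

lemma moeb_coe (γ : SL2R) (τ : ℍ) : moeb γ τ = ↑(γ • τ) :=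
  (UpperHalfPlane.coe_specialLinearGroup_apply γ τ).symm

lemma jfac_sub_conj (γ : SL2R) (z : ℂ) :
    jfac γ z - conj (jfac γ z) = 2 * I * (γ.1 1 0 : ℂ) * z.im := by
  have hz : z - conj z = 2 * z.im * I := mod_cast sub_conj z
  simp only [jfac, map_add, map_mul, conj_ofReal]
  linear_combination (γ.1 1 0 : ℂ) * hz

lemma im_smul_eq_div_normSq_jfac (γ : SL2R) (τ : ℍ) :
    (γ • τ).im = τ.im / normSq (jfac γ τ) := by
  simpa using! UpperHalfPlane.im_smul_eq_div_normSq (γ : GL (Fin 2) ℝ) τ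

lemma jfac_mul_conj_of_smul_eq_self (hfix : γ • τ = τ) :
    jfac γ τ * conj (jfac γ τ) = 1 := by
  have him : τ.im / normSq (jfac γ τ) = τ.im := by
    rw [← im_smul_eq_div_normSq_jfac, hfix]
  have hnormSq : normSq (jfac γ τ) = 1 := by
    rwa [div_eq_mul_inv, mul_eq_left₀ τ.im_ne_zero, inv_eq_one] at him
  rw [mul_conj, hnormSq, ofReal_one]

lemma apply_one_zero_ne_zero_of_smul_eq_self (hγI : γ.1 ≠ 1) (hγnI : γ.1 ≠ -1)
    (hfix : γ • τ = τ) : γ.1 1 0 ≠ 0 := by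
  have hcenter : (γ : GL (Fin 2) ℝ) ∉ Subgroup.center (GL (Fin 2) ℝ) := by
    rw [Matrix.SpecialLinearGroup.toGL_mem_center_iff]
    exact fun h ↦ (coe_eq_one_or_eq_neg_one_of_mem_center h).elim hγI hγnI
  have hdet : 0 < (γ : GL (Fin 2) ℝ).val.det := by simp
  exact (UpperHalfPlane.isElliptic_of_exists_smul_eq_self hdet hcenter ⟨τ, hfix⟩).c_ne_zero

lemma conj_jfac_sub_jfac_mul_eq_of_smul_eq_self {Γ : Subgroup SL2R} {α : ℂ} {φ : ℂ → ℂ}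
    (hφ : IsQuasiWt2 Γ α φ) (hγ : γ ∈ Γ) (hfix : γ • τ = τ) :
    (conj (jfac γ τ) - jfac γ τ) * φ τ = α * (γ.1 1 0 : ℂ) := by
  have hunit := jfac_mul_conj_of_smul_eq_self hfix
  have hj : jfac γ τ ≠ 0 := left_ne_zero_of_mul_eq_one hunit
  have hlaw := hφ γ hγ τ τ.im_pos
  rw [moeb_coe, hfix] at hlaw
  rw [← inv_eq_of_mul_eq_one_right hunit]
  field_simp at hlaw ⊢
  linear_combination hlaw

end FixedPoint

theorem quasimodular_wt2_nonvanishing_at_elliptic_general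
    {Γ : Subgroup SL2R} {α : ℂ} {φ : ℂ → ℂ} (hφ : IsQuasiWt2 Γ α φ)
    {z₀ : ℂ} (hz₀ : z₀ ∈ UHP) {γ : SL2R} (hγ : γ ∈ Γ) (hγI : γ.1 ≠ 1) (hγnI : γ.1 ≠ -1)
    (hfix : moeb γ z₀ = z₀) :
    φ z₀ = I * α / (2 * z₀.im) := by
  lift z₀ to ℍ using hz₀
  have hsmul : γ • z₀ = z₀ := UpperHalfPlane.ext (moeb_coe γ z₀ ▸ hfix)
  have hc : (γ.1 1 0 : ℂ) ≠ 0 :=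
    ofReal_ne_zero.mpr (apply_one_zero_ne_zero_of_smul_eq_self hγI hγnI hsmul)
  have him : ((z₀ : ℂ).im : ℂ) ≠ 0 := ofReal_ne_zero.mpr z₀.im_ne_zero
  have hval : -(2 * I * (z₀ : ℂ).im) * φ z₀ = α := by
    apply mul_left_cancel₀ hc
    linear_combination conj_jfac_sub_jfac_mul_eq_of_smul_eq_self hφ hγ hsmul +
      φ z₀ * jfac_sub_conj γ z₀
  rw [eq_div_iff (mul_ne_zero two_ne_zero him)]
  linear_combination I * hval + 2 * (z₀ : ℂ).im * φ z₀ * I_sq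

/-- Lemma: a quasimodular form of weight 2 and depth 1 on `Γ` does not
vanish at any elliptic point of `Γ`. -/
theorem quasimodular_wt2_nonvanishing_at_elliptic
    (Γ : Subgroup SL2R) (hcomm : Subgroup.Commensurable SL2ZR Γ)
    (φ : ℂ → ℂ) (hφholo : DifferentiableOn ℂ φ UHP)
    (α : ℂ) (hα : α ≠ 0) (hφqm : IsQuasiWt2 Γ α φ)
    (z₀ : ℂ) (hz₀ : z₀ ∈ UHP)
    (γ : SL2R) (hγ : γ ∈ Γ)
    (hγI : (γ : Matrix (Fin 2) (Fin 2) ℝ) ≠ 1)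
    (hγnI : (γ : Matrix (Fin 2) (Fin 2) ℝ) ≠ -1)
    (hfix : moeb γ z₀ = z₀) :
    φ z₀ ≠ 0 := by
  have hval := quasimodular_wt2_nonvanishing_at_elliptic_general hφqm hz₀ hγ hγI hγnI hfix
  simp [hval, hα, (show 0 < z₀.im from hz₀).ne']
end
end
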